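/- arXiv:2307.01287 — 8 statements merged into one kernel-verified Lean document; each statement's English description precedes it below -/
import Mathlib

section
/- For every a ∈ 𝔻 and every z ∈ 𝔻, φ_{ω_a}(φ_a(z)) = −φ_{ω_a}(z); in particular, taking z = 0, φ_{ω_a}(a) = −ω_a. -/
/-!
Write `s = √(1 - |a|²)`, which is nonzero, and `ω = ω_a`. The definition of `ω` gives
`ω · conj a = 1 - s` and `(1 + s) ω = a`, the latter because `1 - s² = a · conj a`
(`omegaPt_relations`). Hence, with `D = 1 - conj a · z`,
`ω - φ_a(z) = s (z - ω) / D` and `1 - conj ω · φ_a(z) = s (1 - conj ω · z) / D`,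
and the quotient of the two is `-φ_ω(z)`.
-/

/-- The Möbius involution `φ_a(z) = (a - z)/(1 - conj a · z)`. -/
noncomputable def phi (a z : ℂ) : ℂ := (a - z) / (1 - (starRingEnd ℂ) a * z)

/-- The fixed point `ω_a` of `φ_a` in the open unit disk:
`ω_a = (1 − √(1 − |a|²))/conj a` for `a ≠ 0`, and `ω_0 = 0`. -/
noncomputable def omegaPt (a : ℂ) : ℂ :=
  if a = 0 then 0 else (1 - (Real.sqrt (1 - ‖a‖ ^ 2) : ℂ)) / (starRingEnd ℂ) a

/-- The two equations in `s = √(1 - |a|²)` that determine `ω_a`, with their conjugates. -/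
lemma omegaPt_relations (a : ℂ) (ha : ‖a‖ < 1) :
    ∃ s : ℂ, s ≠ 0 ∧ omegaPt a * (starRingEnd ℂ) a = 1 - s ∧
      (starRingEnd ℂ) (omegaPt a) * a = 1 - s ∧
      (1 + s) * omegaPt a = a ∧
      (1 + s) * (starRingEnd ℂ) (omegaPt a) = (starRingEnd ℂ) a := by
  have hpos : 0 < 1 - ‖a‖ ^ 2 := by nlinarith [norm_nonneg a]
  set r : ℝ := Real.sqrt (1 - ‖a‖ ^ 2) with hr
  have hr0 : r ≠ 0 := (Real.sqrt_pos.mpr hpos).ne'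
  have hsq : (r : ℂ) ^ 2 = 1 - a * (starRingEnd ℂ) a := by
    rw [Complex.mul_conj']
    exact_mod_cast Real.sq_sqrt hpos.le
  have h1 : omegaPt a * (starRingEnd ℂ) a = 1 - r := by
    by_cases h : a = 0
    · simp [omegaPt, hr, h]
    · have hc : (starRingEnd ℂ) a ≠ 0 := by simpa using h
      simp only [omegaPt, if_neg h, ← hr]
      exact div_mul_cancel₀ _ hc
  have h2 : (1 + (r : ℂ)) * omegaPt a = a := by
    by_cases h : a = 0
    · simp [omegaPt, h]
    · have hc : (starRingEnd ℂ) a ≠ 0 := by simpa using h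
      apply mul_right_cancel₀ hc
      linear_combination (1 + (r : ℂ)) * h1 - hsq
  refine ⟨r, by exact_mod_cast hr0, h1, ?_, h2, ?_⟩
  · simpa using congrArg (starRingEnd ℂ) h1
  · simpa using congrArg (starRingEnd ℂ) h2

/-- For every `a` in the open unit disk and every `z` in the disk,
`φ_{ω_a}(φ_a(z)) = −φ_{ω_a}(z)`; in particular (taking `z = 0`),
`φ_{ω_a}(a) = −ω_a`. -/
theorem stmt1 (a : ℂ) (ha : ‖a‖ < 1) :
    (∀ z : ℂ, ‖z‖ < 1 → phi (omegaPt a) (phi a z) = - phi (omegaPt a) z) ∧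
    phi (omegaPt a) a = - omegaPt a := by
  have key : ∀ z : ℂ, ‖z‖ < 1 → phi (omegaPt a) (phi a z) = - phi (omegaPt a) z := by
    intro z hz
    obtain ⟨s, hs, h1, h2, h3, h4⟩ := omegaPt_relations a ha
    have hD : 1 - (starRingEnd ℂ) a * z ≠ 0 := by
      intro h
      have h' : ‖(starRingEnd ℂ) a * z‖ = 1 := by rw [← sub_eq_zero.mp h, norm_one]
      rw [norm_mul, RCLike.norm_conj] at h'
      nlinarith [norm_nonneg a, norm_nonneg z]
    unfold phi
    generalize omegaPt a = w at *
    have hnum : w - (a - z) / (1 - (starRingEnd ℂ) a * z) =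
        s / (1 - (starRingEnd ℂ) a * z) * (z - w) := by
      rw [sub_div' hD, div_mul_eq_mul_div, div_left_inj' hD]
      linear_combination -z * h1 + h3
    have hden : 1 - (starRingEnd ℂ) w * ((a - z) / (1 - (starRingEnd ℂ) a * z)) =
        s / (1 - (starRingEnd ℂ) a * z) * (1 - (starRingEnd ℂ) w * z) := by
      rw [← mul_div_assoc, sub_div' hD, div_mul_eq_mul_div, div_left_inj' hD]
      linear_combination -h2 + z * h4
    -- Cancelling the common factor `s / D` does not need `1 - conj w * z ≠ 0`.
    rw [hnum, hden, mul_div_mul_left _ _ (div_ne_zero hs hD), ← neg_div, neg_sub]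
  refine ⟨key, ?_⟩
  simpa [phi] using key 0 (by simp)
end

section
/- For all b, d ∈ 𝔻, the number d∙b := (2d − b − conj(b)·d²)/(1 + |d|² − conj(b)·d − b·conj(d)) lies in 𝔻, and φ_d(φ_b(φ_d(z))) = φ_{d∙b}(z) for all z ∈ 𝔻. -/
/-- The point `d∙b = (2d − b − conj b·d²)/(1 + |d|² − conj b·d − b·conj d)`. -/
noncomputable def bullet (d b : ℂ) : ℂ :=
  (2 * d - b - (starRingEnd ℂ) b * d ^ 2) /
    (1 + ((‖d‖ ^ 2 : ℝ) : ℂ) - (starRingEnd ℂ) b * d - b * (starRingEnd ℂ) d)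

open ComplexConjugate

lemma norm_sub_lt_norm_one_sub {a z : ℂ} (ha : ‖a‖ < 1) (hz : ‖z‖ < 1) :
    ‖a - z‖ < ‖1 - conj a * z‖ := by
  have ha' : ‖a‖ ^ 2 < 1 := by nlinarith [norm_nonneg a]
  have hz' : ‖z‖ ^ 2 < 1 := by nlinarith [norm_nonneg z]
  apply lt_of_pow_lt_pow_left₀ 2 (norm_nonneg _)
  have key : ‖1 - conj a * z‖ ^ 2 - ‖a - z‖ ^ 2 = (1 - ‖a‖ ^ 2) * (1 - ‖z‖ ^ 2) := by
    simp only [Complex.sq_norm, Complex.normSq_apply, Complex.sub_re, Complex.sub_im,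
      Complex.mul_re, Complex.mul_im, Complex.conj_re, Complex.conj_im, Complex.one_re,
      Complex.one_im]
    ring
  nlinarith [mul_pos (sub_pos.2 ha') (sub_pos.2 hz')]

/-- Homogeneous form of `phi`. No hypothesis on `q - conj a * p` is needed: both sides are `0`
when it vanishes. -/
lemma phi_div (a p : ℂ) {q : ℂ} (hq : q ≠ 0) :
    phi a (p / q) = (a * q - p) / (q - conj a * p) := by
  have h1 : a - p / q = (a * q - p) / q := by field_simp
  have h2 : 1 - conj a * (p / q) = (q - conj a * p) / q := by field_simp
  rw [phi, h1, h2, div_div_div_cancel_right₀ hq]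

/-- The denominator of `bullet d b`, as a real number. -/
noncomputable def bulletDen (d b : ℂ) : ℝ := 1 + ‖d‖ ^ 2 - 2 * (conj b * d).re

lemma bulletDen_pos {d b : ℂ} (hb : ‖b‖ < 1) (hd : ‖d‖ < 1) : 0 < bulletDen d b := by
  have h : (conj b * d).re ≤ ‖b‖ * ‖d‖ := by
    simpa using Complex.re_le_norm (conj b * d)
  unfold bulletDen
  nlinarith [norm_nonneg b, norm_nonneg d, mul_nonneg (sub_nonneg.2 hb.le) (norm_nonneg d),
    mul_pos (sub_pos.2 hd) (sub_pos.2 hd)]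

lemma coe_bulletDen (d b : ℂ) :
    (bulletDen d b : ℂ) = 1 + d * conj d - conj b * d - b * conj d := by
  rw [Complex.mul_conj]
  apply Complex.ext <;>
    simp [bulletDen, Complex.sq_norm, Complex.normSq_apply] <;> ring

lemma bullet_eq (d b : ℂ) :
    bullet d b = (2 * d - b - conj b * d ^ 2) / (bulletDen d b : ℂ) := by
  rw [bullet, coe_bulletDen, Complex.mul_conj, Complex.normSq_eq_norm_sq]

lemma bulletDen_sq_sub (d b : ℂ) :
    bulletDen d b ^ 2 - ‖2 * d - b - conj b * d ^ 2‖ ^ 2 =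
      (1 - ‖d‖ ^ 2) ^ 2 * (1 - ‖b‖ ^ 2) := by
  simp only [bulletDen, Complex.sq_norm, Complex.normSq_apply, Complex.sub_re, Complex.sub_im,
    Complex.mul_re, Complex.mul_im, Complex.conj_re, Complex.conj_im, Complex.re_ofNat,
    Complex.im_ofNat, pow_two d]
  ring

lemma norm_bullet_lt_one {d b : ℂ} (hb : ‖b‖ < 1) (hd : ‖d‖ < 1) : ‖bullet d b‖ < 1 := by
  have hpos := bulletDen_pos hb hd
  have hb' : 0 < 1 - ‖b‖ ^ 2 := by nlinarith [norm_nonneg b]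
  have hd' : 0 < 1 - ‖d‖ ^ 2 := by nlinarith [norm_nonneg d]
  rw [bullet_eq, norm_div, Complex.norm_of_nonneg hpos.le, div_lt_one hpos]
  apply lt_of_pow_lt_pow_left₀ 2 hpos.le
  have := bulletDen_sq_sub d b
  have : 0 < (1 - ‖d‖ ^ 2) ^ 2 * (1 - ‖b‖ ^ 2) := by positivity
  linarith

/-- For all `b, d` in the open unit disk, `d∙b` lies in the unit disk and
`φ_d ∘ φ_b ∘ φ_d = φ_{d∙b}` on the disk. -/
theorem stmt2 (b d : ℂ) (hb : ‖b‖ < 1) (hd : ‖d‖ < 1) :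
    ‖bullet d b‖ < 1 ∧
    ∀ z : ℂ, ‖z‖ < 1 → phi d (phi b (phi d z)) = phi (bullet d b) z := by
  refine ⟨norm_bullet_lt_one hb hd, fun z hz => ?_⟩
  have hD : (bulletDen d b : ℂ) ≠ 0 := by exact_mod_cast (bulletDen_pos hb hd).ne'
  have hlt := norm_sub_lt_norm_one_sub hd hz
  have hq : 1 - conj d * z ≠ 0 := norm_pos_iff.1 ((norm_nonneg _).trans_lt hlt)
  -- The second denominator is nonzero because `|conj b (d - z)| ≤ |d - z| < |1 - conj d z|`.
  have hQ : (1 - conj d * z) - conj b * (d - z) ≠ 0 := by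
    intro h
    have h1 : ‖1 - conj d * z‖ = ‖b‖ * ‖d - z‖ := by
      rw [sub_eq_zero.1 h, norm_mul, Complex.norm_conj]
    nlinarith [norm_nonneg (d - z)]
  have hR : phi (bullet d b) z =
      ((2 * d - b - conj b * d ^ 2) - bulletDen d b * z) /
        (bulletDen d b - conj (2 * d - b - conj b * d ^ 2) * z) := by
    rw [bullet_eq, phi, map_div₀, Complex.conj_ofReal]
    refine Eq.trans ?_ (div_div_div_cancel_right₀ hD _ _)
    congr 1 <;> field_simp
  rw [hR, show phi d z = (d - z) / (1 - conj d * z) from rfl, phi_div b _ hq, phi_div d _ hQ,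
    coe_bulletDen]
  congr 1
  · ring
  · simp only [map_sub, map_mul, map_pow, Complex.conj_conj, map_ofNat]
    ring
end

section
/- Let a ∈ 𝔻 with a ≠ 0 and let n ≥ 1. Then (φ_a ∘ φ_0)^{(n)} ∘ φ_a = φ_{a_n} on 𝔻, where (φ_a ∘ φ_0)^{(n)} denotes the n-fold composition of φ_a ∘ φ_0 with itself, and a_n = (a/|a|)·((1+|a|)^{n+1} − (1−|a|)^{n+1})/((1+|a|)^{n+1} + (1−|a|)^{n+1}); in particular a_n ∈ 𝔻. -/
/-- `a_n = (a/|a|)·((1+|a|)^{n+1} − (1−|a|)^{n+1})/((1+|a|)^{n+1} + (1−|a|)^{n+1})`. -/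
noncomputable def aSeq (a : ℂ) (n : ℕ) : ℂ :=
  (a / (‖a‖ : ℂ)) *
    ((((1 + ‖a‖) ^ (n + 1) - (1 - ‖a‖) ^ (n + 1)) /
        ((1 + ‖a‖) ^ (n + 1) + (1 - ‖a‖) ^ (n + 1)) : ℝ) : ℂ)

/-- The real factor `t_n` in `a_n = (a / ‖a‖) t_n`, as a function of `r = ‖a‖`. -/
noncomputable def aRadius (r : ℝ) (n : ℕ) : ℝ :=
  ((1 + r) ^ (n + 1) - (1 - r) ^ (n + 1)) / ((1 + r) ^ (n + 1) + (1 - r) ^ (n + 1))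

lemma aRadius_zero (r : ℝ) : aRadius r 0 = r := by
  unfold aRadius
  ring

lemma aRadius_nonneg {r : ℝ} (h0 : 0 ≤ r) (h1 : r < 1) (n : ℕ) : 0 ≤ aRadius r n := by
  have h : (1 - r) ^ (n + 1) ≤ (1 + r) ^ (n + 1) :=
    pow_le_pow_left₀ (by linarith) (by linarith) _
  have hQ : 0 < (1 - r) ^ (n + 1) := pow_pos (by linarith) _
  exact div_nonneg (by linarith) (by linarith)

lemma aRadius_lt_one {r : ℝ} (h0 : 0 ≤ r) (h1 : r < 1) (n : ℕ) : aRadius r n < 1 := by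
  have hP : 0 < (1 + r) ^ (n + 1) := pow_pos (by linarith) _
  have hQ : 0 < (1 - r) ^ (n + 1) := pow_pos (by linarith) _
  unfold aRadius
  rw [div_lt_one (by linarith)]
  linarith

lemma aRadius_succ {r : ℝ} (h0 : 0 ≤ r) (h1 : r < 1) (n : ℕ) :
    aRadius r (n + 1) = (aRadius r n + r) / (1 + r * aRadius r n) := by
  have ht : 1 + r * aRadius r n ≠ 0 := by
    have := mul_nonneg h0 (aRadius_nonneg h0 h1 n)
    linarith
  have hP : 0 < (1 + r) ^ (n + 1) := pow_pos (by linarith) _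
  have hQ : 0 < (1 - r) ^ (n + 1) := pow_pos (by linarith) _
  have hP' : 0 < (1 + r) ^ (n + 1) * (1 + r) := mul_pos hP (by linarith)
  have hQ' : 0 < (1 - r) ^ (n + 1) * (1 - r) := mul_pos hQ (by linarith)
  rw [eq_div_iff ht]
  unfold aRadius
  rw [pow_succ (1 + r) (n + 1), pow_succ (1 - r) (n + 1)]
  generalize (1 + r) ^ (n + 1) = P at *
  generalize (1 - r) ^ (n + 1) = Q at *
  have hS : P + Q ≠ 0 := by linarith
  have hS' : P * (1 + r) + Q * (1 - r) ≠ 0 := by linarith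
  field_simp
  ring

/-- The denominator of `φ_{ut}` does not vanish on the disk. -/
lemma one_sub_ne_zero {u z : ℂ} {t : ℝ} (hu : ‖u‖ = 1) (h0 : 0 ≤ t) (h1 : t < 1)
    (hz : ‖z‖ < 1) : 1 - (starRingEnd ℂ) u * t * z ≠ 0 := by
  intro h
  have h2 : ‖(starRingEnd ℂ) u * t * z‖ = 1 := by
    rw [← sub_eq_zero.mp h, norm_one]
  rw [norm_mul, norm_mul, RCLike.norm_conj, hu, Complex.norm_real, Real.norm_of_nonneg h0,
    one_mul] at h2
  nlinarith [norm_nonneg z]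

/-- Involutions with centres on a common ray compose by velocity addition. -/
lemma phi_phi_zero_phi {u z : ℂ} {r t : ℝ} (hu : ‖u‖ = 1) (hr0 : 0 ≤ r) (hr1 : r < 1)
    (ht0 : 0 ≤ t) (ht1 : t < 1) (hz : ‖z‖ < 1) :
    phi (u * r) (phi 0 (phi (u * t) z)) = phi (u * ((t + r) / (1 + r * t) : ℝ)) z := by
  have huu : u * (starRingEnd ℂ) u = 1 := by
    rw [Complex.mul_conj', hu]
    norm_num
  have hpos : 0 < 1 + r * t := by positivity
  have hs0 : 0 ≤ (t + r) / (1 + r * t) := by positivity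
  have hs1 : (t + r) / (1 + r * t) < 1 := by
    rw [div_lt_one hpos]
    nlinarith
  have hd1 := one_sub_ne_zero hu ht0 ht1 hz
  have hd2 := one_sub_ne_zero hu hs0 hs1 hz
  have hc : (1 + r * t : ℂ) ≠ 0 := by exact_mod_cast hpos.ne'
  simp only [phi, map_mul, map_zero, Complex.conj_ofReal, zero_mul, sub_zero, zero_sub, div_one]
  push_cast at hd2 ⊢
  generalize (starRingEnd ℂ) u = v at *
  -- Both sides are the quotient `N / D` of these two affine functions of `z`.
  set N : ℂ := u * (t + r) - (1 + r * t) * z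
  set D : ℂ := (1 + r * t) - v * (t + r) * z
  have e1 : u * r - -((u * t - z) / (1 - v * t * z)) = N / (1 - v * t * z) := by
    rw [eq_div_iff hd1, sub_mul, neg_mul, div_mul_cancel₀ _ hd1]
    linear_combination (-(r * t * z) : ℂ) * huu
  have e2 : 1 - v * r * -((u * t - z) / (1 - v * t * z)) = D / (1 - v * t * z) := by
    rw [eq_div_iff hd1, sub_mul, mul_neg, neg_mul, mul_assoc (v * r : ℂ), div_mul_cancel₀ _ hd1]
    linear_combination (r * t : ℂ) * huu
  have e3 : u * ((t + r) / (1 + r * t)) - z = N / (1 + r * t) := by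
    rw [eq_div_iff hc, sub_mul, mul_assoc, div_mul_cancel₀ _ hc]
    ring
  have e4 : 1 - v * ((t + r) / (1 + r * t)) * z = D / (1 + r * t) := by
    rw [eq_div_iff hc]
    linear_combination (-(v * z)) * div_mul_cancel₀ (t + r : ℂ) hc
  rw [e1, e2, e3, e4, div_div_div_cancel_right₀ hd1, div_div_div_cancel_right₀ hc]

/-- For `a ≠ 0` in the open unit disk and `n ≥ 1`, the `n`-fold composition of
`φ_a ∘ φ_0` with itself, composed with `φ_a`, equals `φ_{a_n}` on the disk;
in particular `a_n` lies in the disk. -/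
theorem stmt3 (a : ℂ) (ha : ‖a‖ < 1) (ha0 : a ≠ 0) (n : ℕ) (hn : 1 ≤ n) :
    ‖aSeq a n‖ < 1 ∧
    ∀ z : ℂ, ‖z‖ < 1 →
      (fun w => phi a (phi 0 w))^[n] (phi a z) = phi (aSeq a n) z := by
  set u : ℂ := a / (‖a‖ : ℂ)
  have hna : ‖a‖ ≠ 0 := norm_ne_zero_iff.mpr ha0
  have hu : ‖u‖ = 1 := by
    rw [norm_div, Complex.norm_real, norm_norm, div_self hna]
  have hua : u * (‖a‖ : ℂ) = a := div_mul_cancel₀ _ (by exact_mod_cast hna)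
  have hseq : ∀ m, aSeq a m = u * (aRadius ‖a‖ m : ℂ) := fun _ => rfl
  have hr0 := norm_nonneg a
  refine ⟨?_, fun z hz => ?_⟩
  · rw [hseq, norm_mul, hu, one_mul, Complex.norm_real,
      Real.norm_of_nonneg (aRadius_nonneg hr0 ha n)]
    exact aRadius_lt_one hr0 ha n
  · clear hn
    induction n with
    | zero => rw [Function.iterate_zero_apply, hseq, aRadius_zero, hua]
    | succ m ih =>
      have h := phi_phi_zero_phi hu hr0 ha (aRadius_nonneg hr0 ha m) (aRadius_lt_one hr0 ha m) hz
      rw [hua, ← aRadius_succ hr0 ha, ← hseq, ← hseq] at h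
      rw [Function.iterate_succ_apply', ih]
      exact h
end

section
/- For every a ∈ 𝔻, the point b = 2a/(1 + |a|²) lies in 𝔻 and satisfies ω_b = a; moreover b is the unique element of 𝔻 whose fixed point ω_b equals a. -/
/-- Rationalizing the numerator: `ω_b = b/(1 + √(1 − |b|²))`, which also covers `b = 0`. -/
theorem omegaPt_eq (b : ℂ) (hb : ‖b‖ < 1) :
    omegaPt b = b / (1 + (Real.sqrt (1 - ‖b‖ ^ 2) : ℂ)) := by
  unfold omegaPt
  split_ifs with h0
  · simp [h0]
  · have hs0 : 0 ≤ Real.sqrt (1 - ‖b‖ ^ 2) := Real.sqrt_nonneg _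
    have hs : Real.sqrt (1 - ‖b‖ ^ 2) ^ 2 = 1 - ‖b‖ ^ 2 :=
      Real.sq_sqrt (by nlinarith [norm_nonneg b])
    generalize Real.sqrt (1 - ‖b‖ ^ 2) = s at hs hs0
    have h1 : (1 + (s : ℂ)) ≠ 0 := by
      have : (1 + s) ≠ 0 := by positivity
      exact_mod_cast this
    have h2 : (starRingEnd ℂ) b ≠ 0 := by simpa using h0
    have h3 : b * (starRingEnd ℂ) b = (‖b‖ : ℂ) ^ 2 := Complex.mul_conj' b
    have h4 : (s : ℂ) ^ 2 = 1 - (‖b‖ : ℂ) ^ 2 := by exact_mod_cast hs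
    rw [div_eq_div_iff h2 h1]
    linear_combination -h4 - h3

/-- For every `a` in the open unit disk, `b = 2a/(1 + |a|²)` lies in the disk and
satisfies `ω_b = a`; moreover `b` is the unique element of the disk with `ω_b = a`. -/
theorem stmt4 (a : ℂ) (ha : ‖a‖ < 1) :
    ‖2 * a / (1 + ((‖a‖ ^ 2 : ℝ) : ℂ))‖ < 1 ∧
    omegaPt (2 * a / (1 + ((‖a‖ ^ 2 : ℝ) : ℂ))) = a ∧
    ∀ b : ℂ, ‖b‖ < 1 → omegaPt b = a → b = 2 * a / (1 + ((‖a‖ ^ 2 : ℝ) : ℂ)) := by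
  have hr : 0 ≤ ‖a‖ := norm_nonneg a
  have hr1 : 0 < 1 + ‖a‖ ^ 2 := by positivity
  have hc : (1 + ((‖a‖ ^ 2 : ℝ) : ℂ)) ≠ 0 := by exact_mod_cast hr1.ne'
  have hn : ‖2 * a / (1 + ((‖a‖ ^ 2 : ℝ) : ℂ))‖ = 2 * ‖a‖ / (1 + ‖a‖ ^ 2) := by
    have : ‖(1 + ((‖a‖ ^ 2 : ℝ) : ℂ))‖ = 1 + ‖a‖ ^ 2 := by
      rw [← Complex.ofReal_one, ← Complex.ofReal_add, Complex.norm_of_nonneg hr1.le]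
    rw [norm_div, norm_mul, this, Complex.norm_ofNat]
  have hlt : ‖2 * a / (1 + ((‖a‖ ^ 2 : ℝ) : ℂ))‖ < 1 := by
    rw [hn, div_lt_one hr1]
    nlinarith
  refine ⟨hlt, ?_, fun b hb hab => ?_⟩
  · rw [omegaPt_eq _ hlt, hn]
    have hs : Real.sqrt (1 - (2 * ‖a‖ / (1 + ‖a‖ ^ 2)) ^ 2)
        = (1 - ‖a‖ ^ 2) / (1 + ‖a‖ ^ 2) := by
      have : 1 - (2 * ‖a‖ / (1 + ‖a‖ ^ 2)) ^ 2 = ((1 - ‖a‖ ^ 2) / (1 + ‖a‖ ^ 2)) ^ 2 := by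
        field_simp
        ring
      rw [this, Real.sqrt_sq (div_nonneg (by nlinarith) hr1.le)]
    have h2 : (1 : ℂ) + (((1 - ‖a‖ ^ 2) / (1 + ‖a‖ ^ 2) : ℝ) : ℂ)
        = 2 / (1 + ((‖a‖ ^ 2 : ℝ) : ℂ)) := by
      rw [eq_div_iff hc]
      have : (1 + (1 - ‖a‖ ^ 2) / (1 + ‖a‖ ^ 2)) * (1 + ‖a‖ ^ 2) = 2 := by
        field_simp
        ring
      exact_mod_cast this
    rw [hs, h2]
    field_simp
  · rw [omegaPt_eq b hb] at hab
    have hs0 : 0 ≤ Real.sqrt (1 - ‖b‖ ^ 2) := Real.sqrt_nonneg _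
    have hs : Real.sqrt (1 - ‖b‖ ^ 2) ^ 2 = 1 - ‖b‖ ^ 2 :=
      Real.sq_sqrt (by nlinarith [norm_nonneg b])
    generalize Real.sqrt (1 - ‖b‖ ^ 2) = s at hs hs0 hab
    have hs1 : 0 < 1 + s := by positivity
    have hs1c : (1 + (s : ℂ)) ≠ 0 := by exact_mod_cast hs1.ne'
    have hb' : b = a * (1 + (s : ℂ)) := (div_eq_iff hs1c).mp hab
    have hnb : ‖b‖ = ‖a‖ * (1 + s) := by
      rw [hb', norm_mul, ← Complex.ofReal_one, ← Complex.ofReal_add,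
        Complex.norm_of_nonneg hs1.le]
    -- `1 - s² = |b|² = |a|²(1 + s)²`; cancelling `1 + s > 0` determines `s`.
    have key : (1 + s) * (1 + ‖a‖ ^ 2) = 2 := by
      rw [hnb] at hs
      apply mul_left_cancel₀ hs1.ne'
      linear_combination hs
    have keyc : (1 + (s : ℂ)) * (1 + ((‖a‖ ^ 2 : ℝ) : ℂ)) = 2 := by exact_mod_cast key
    rw [eq_div_iff hc, hb']
    linear_combination a * keyc
end

section
/- Let a ∈ 𝔻. Then: (i) W_a(W_a f) = f for every function f : 𝔻 → ℂ; (ii) if f ∈ H², then W_a f ∈ H² and ‖W_a f‖ = ‖f‖. Hence W_a is a selfadjoint unitary operator (a symmetry) of H². -/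
/-- `f` belongs to the Hardy space `H²` of the disk, with Taylor coefficients `c`:
`f(z) = Σ cₙ zⁿ` on the open unit disk and `Σ |cₙ|² < ∞`. -/
def IsH2Rep (f : ℂ → ℂ) (c : ℕ → ℂ) : Prop :=
  Summable (fun n => ‖c n‖ ^ 2) ∧
    ∀ z : ℂ, ‖z‖ < 1 → HasSum (fun n => c n * z ^ n) (f z)

/-- `ψ_a(z) = √(1 − |a|²)/(1 − conj a · z)`. -/
noncomputable def psiFun (a z : ℂ) : ℂ :=
  (Real.sqrt (1 - ‖a‖ ^ 2) : ℂ) / (1 - (starRingEnd ℂ) a * z)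

/-- `W_a f = ψ_a · (f ∘ φ_a)`. -/
noncomputable def Wop (a : ℂ) (f : ℂ → ℂ) : ℂ → ℂ := fun z => psiFun a z * f (phi a z)

lemma one_sub_conj_mul_ne_zero {a z : ℂ} (ha : ‖a‖ < 1) (hz : ‖z‖ < 1) :
    1 - (starRingEnd ℂ) a * z ≠ 0 := by
  intro h
  have h1 : ‖(starRingEnd ℂ) a * z‖ = 1 := by rw [← sub_eq_zero.mp h]; simp
  rw [norm_mul, RCLike.norm_conj] at h1
  nlinarith [norm_nonneg a, norm_nonneg z]

/-- The sequence `(conj z ^ n)ₙ` is square-summable for `z` in the disk. -/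
lemma memlp_szego {z : ℂ} (hz : ‖z‖ < 1) :
    Memℓp (fun n : ℕ => (starRingEnd ℂ) z ^ n) 2 := by
  apply memℓp_gen
  have h : ‖z‖ ^ 2 < 1 := by nlinarith [norm_nonneg z]
  refine (summable_geometric_of_lt_one (by positivity) h).congr fun n => ?_
  simp [← pow_mul, mul_comm]

/-- The Szegő kernel at `z`, as the sequence of its Taylor coefficients. -/
noncomputable def szego (z : ℂ) (hz : ‖z‖ < 1) : lp (fun _ : ℕ => ℂ) 2 :=
  ⟨fun n => (starRingEnd ℂ) z ^ n, memlp_szego hz⟩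

/-- Reproducing property: pairing with the Szegő kernel evaluates the power series at `z`. -/
lemma inner_szego {z : ℂ} (hz : ‖z‖ < 1) (x : lp (fun _ : ℕ => ℂ) 2) :
    HasSum (fun n => x n * z ^ n) (inner ℂ (szego z hz) x) := by
  have h := lp.hasSum_inner (𝕜 := ℂ) (szego z hz) x
  refine h.congr_fun ?_
  intro n
  simp [szego]

/-- An orthonormal sequence `v` in `ℓ²` defines an isometry sending the standard basis to `v`. -/
lemma exists_isometry (v : ℕ → lp (fun _ : ℕ => ℂ) 2) (hv : Orthonormal ℂ v) :
    ∃ L : lp (fun _ : ℕ => ℂ) 2 →ₗᵢ[ℂ] lp (fun _ : ℕ => ℂ) 2,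
      ∀ c y, HasSum (fun n => c n * inner ℂ y (v n)) (inner ℂ y (L c)) := by
  refine ⟨hv.orthogonalFamily.linearIsometry, fun c y => ?_⟩
  have h := hv.orthogonalFamily.hasSum_linearIsometry c
  have h2 := (innerSL ℂ y).hasSum h
  refine h2.congr_fun ?_
  intro n
  simp

/-- The unilateral shift: multiplication by the coordinate function is isometric on `H²`. -/
lemma exists_shift :
    ∃ S : lp (fun _ : ℕ => ℂ) 2 →ₗᵢ[ℂ] lp (fun _ : ℕ => ℂ) 2,
      ∀ (z : ℂ) (hz : ‖z‖ < 1) (x),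
        inner ℂ (szego z hz) (S x) = z * inner ℂ (szego z hz) x := by
  have hv : Orthonormal ℂ (fun n : ℕ => (lp.single 2 (n + 1) (1 : ℂ) : lp (fun _ : ℕ => ℂ) 2)) := by
    rw [orthonormal_iff_ite]
    intro i j
    rw [lp.inner_single_left]
    by_cases h : i = j
    · subst h; simp
    · simp [h]
  obtain ⟨S, hS⟩ := exists_isometry _ hv
  refine ⟨S, fun z hz x => (hS x (szego z hz)).unique ?_⟩
  refine ((inner_szego hz x).mul_left z).congr_fun ?_
  intro n
  rw [lp.inner_single_right]
  simp [szego, pow_succ]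
  ring

/-- Multiplication by `φ_a` is isometric on `H²`: it is `(a - S) (1 - conj a • S)⁻¹`. -/
lemma exists_mul_phi {a : ℂ} (ha : ‖a‖ < 1) :
    ∃ V : lp (fun _ : ℕ => ℂ) 2 →ₗᵢ[ℂ] lp (fun _ : ℕ => ℂ) 2,
      ∀ (z : ℂ) (hz : ‖z‖ < 1) (x),
        inner ℂ (szego z hz) (V x) = phi a z * inner ℂ (szego z hz) x := by
  obtain ⟨S, hS⟩ := exists_shift
  set b : ℂ := (starRingEnd ℂ) a with hb
  let B : lp (fun _ : ℕ => ℂ) 2 →L[ℂ] lp (fun _ : ℕ => ℂ) 2 := b • S.toContinuousLinearMap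
  have hB : ‖B‖ < 1 := by
    refine lt_of_le_of_lt (norm_smul_le b S.toContinuousLinearMap) ?_
    have h1 := S.norm_toContinuousLinearMap_le
    have h2 : ‖b‖ = ‖a‖ := by simp [hb]
    rw [h2]
    nlinarith [norm_nonneg a]
  let U := Units.oneSub B hB
  let T : lp (fun _ : ℕ => ℂ) 2 →L[ℂ] lp (fun _ : ℕ => ℂ) 2 := ↑U⁻¹
  have hT : ∀ x, T x - b • S (T x) = x := fun x => by
    have h := congrArg (fun R : lp (fun _ : ℕ => ℂ) 2 →L[ℂ] lp (fun _ : ℕ => ℂ) 2 => R x)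
      U.mul_inv
    simpa [U, T, B] using h
  -- both squares equal `|a|² ‖u‖² + ‖u‖² - 2 Re (conj a ⟪u, S u⟫)`
  have hnorm : ∀ u, ‖a • u - S u‖ = ‖u - b • S u‖ := fun u => by
    rw [← sq_eq_sq₀ (norm_nonneg _) (norm_nonneg _), norm_sub_sq (𝕜 := ℂ), norm_sub_sq (𝕜 := ℂ),
      inner_smul_left, inner_smul_right, norm_smul, norm_smul, S.norm_map, hb, RCLike.norm_conj]
    ring
  refine ⟨⟨((a • ContinuousLinearMap.id ℂ _ - S.toContinuousLinearMap) ∘L T).toLinearMap,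
    fun x => ?_⟩, fun z hz x => ?_⟩
  · change ‖a • T x - S (T x)‖ = ‖x‖
    rw [hnorm, hT]
  · change inner ℂ (szego z hz) (a • T x - S (T x)) = _
    have h : inner ℂ (szego z hz) x = (1 - b * z) * inner ℂ (szego z hz) (T x) := by
      conv_lhs => rw [← hT x]
      rw [inner_sub_right, inner_smul_right, hS]
      ring
    have h0 : 1 - b * z ≠ 0 := one_sub_conj_mul_ne_zero ha hz
    rw [h, inner_sub_right, inner_smul_right, hS, phi, ← hb, ← mul_assoc,
      div_mul_cancel₀ _ h0]
    ring

lemma inner_szego_szego {a z : ℂ} (ha : ‖a‖ < 1) (hz : ‖z‖ < 1) :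
    inner ℂ (szego z hz) (szego a ha) = (1 - (starRingEnd ℂ) a * z)⁻¹ := by
  refine (inner_szego hz _).unique ?_
  have h : ‖(starRingEnd ℂ) a * z‖ < 1 := by
    rw [norm_mul, RCLike.norm_conj]
    nlinarith [norm_nonneg a, norm_nonneg z]
  refine (hasSum_geometric_of_norm_lt_one h).congr_fun ?_
  intro n
  simp [szego, mul_pow]

/-- The functions `ψ_a φ_a ^ n` form an orthonormal sequence of `H²`. -/
lemma exists_orthonormal {a : ℂ} (ha : ‖a‖ < 1) :
    ∃ v : ℕ → lp (fun _ : ℕ => ℂ) 2, Orthonormal ℂ v ∧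
      ∀ (z : ℂ) (hz : ‖z‖ < 1) (n : ℕ),
        inner ℂ (szego z hz) (v n) = psiFun a z * phi a z ^ n := by
  obtain ⟨V, hV⟩ := exists_mul_phi ha
  set s : ℂ := (Real.sqrt (1 - ‖a‖ ^ 2) : ℂ) with hs
  let v : ℕ → lp (fun _ : ℕ => ℂ) 2 := fun n => V^[n] (s • szego a ha)
  have hsucc : ∀ n, v (n + 1) = V (v n) := fun n => Function.iterate_succ_apply' _ _ _
  have hev : ∀ (z : ℂ) (hz : ‖z‖ < 1) (n : ℕ),
      inner ℂ (szego z hz) (v n) = psiFun a z * phi a z ^ n := by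
    intro z hz n
    induction n with
    | zero =>
      change inner ℂ (szego z hz) (s • szego a ha) = _
      rw [inner_smul_right, inner_szego_szego, psiFun, pow_zero, mul_one, div_eq_mul_inv]
    | succ n ih => rw [hsucc, hV, ih]; ring
  have hpos : 0 < 1 - ‖a‖ ^ 2 := by nlinarith [norm_nonneg a]
  have hzero : ∀ n, inner ℂ (v 0) (v n) = if n = 0 then (1 : ℂ) else 0 := by
    intro n
    change inner ℂ (s • szego a ha) (v n) = _
    rw [inner_smul_left, hev]
    rcases n with _ | n
    · have h1 : (1 : ℂ) - (starRingEnd ℂ) a * a = ((1 - ‖a‖ ^ 2 : ℝ) : ℂ) := by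
        rw [Complex.conj_mul']; push_cast; rfl
      have h2 : s * s = ((1 - ‖a‖ ^ 2 : ℝ) : ℂ) := by
        rw [hs, ← Complex.ofReal_mul, Real.mul_self_sqrt hpos.le]
      have h3 : ((1 - ‖a‖ ^ 2 : ℝ) : ℂ) ≠ 0 := by exact_mod_cast hpos.ne'
      rw [psiFun, h1, hs, Complex.conj_ofReal, ← hs, pow_zero, mul_one, ← mul_div_assoc, h2,
        div_self h3, if_pos rfl]
    · simp [phi]
  -- `V` preserves inner products, so the Gram matrix depends only on the difference of indices
  have hadd : ∀ m k, inner ℂ (v m) (v (m + k)) = if k = 0 then (1 : ℂ) else 0 := by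
    intro m k
    induction m with
    | zero => rw [zero_add, hzero]
    | succ m ih => rw [add_right_comm, hsucc, hsucc, V.inner_map_map, ih]
  refine ⟨v, orthonormal_iff_ite.mpr fun i j => ?_, hev⟩
  rcases le_total i j with h | h
  · obtain ⟨k, rfl⟩ := Nat.exists_eq_add_of_le h
    simp [hadd]
  · obtain ⟨k, rfl⟩ := Nat.exists_eq_add_of_le h
    rw [← inner_conj_symm, hadd]
    split_ifs <;> simp_all

lemma norm_phi_lt_one {a z : ℂ} (ha : ‖a‖ < 1) (hz : ‖z‖ < 1) : ‖phi a z‖ < 1 := by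
  have h0 := one_sub_conj_mul_ne_zero ha hz
  rw [phi, norm_div, div_lt_one (norm_pos_iff.mpr h0),
    ← sq_lt_sq₀ (norm_nonneg _) (norm_nonneg _), ← Complex.normSq_eq_norm_sq,
    ← Complex.normSq_eq_norm_sq]
  -- the difference of the two sides is `(1 - |a|²) (1 - |z|²)`
  have h1 : 0 < (1 - ‖a‖ ^ 2) * (1 - ‖z‖ ^ 2) := by
    apply mul_pos <;> nlinarith [norm_nonneg a, norm_nonneg z]
  rw [← Complex.normSq_eq_norm_sq, ← Complex.normSq_eq_norm_sq] at h1
  simp only [Complex.normSq_apply, Complex.sub_re, Complex.sub_im, Complex.mul_re, Complex.mul_im,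
    Complex.conj_re, Complex.conj_im, Complex.one_re, Complex.one_im] at h1 ⊢
  nlinarith [h1]

lemma one_sub_conj_mul_phi {a z : ℂ} (ha : ‖a‖ < 1) (hz : ‖z‖ < 1) :
    1 - (starRingEnd ℂ) a * phi a z =
      (1 - (starRingEnd ℂ) a * a) / (1 - (starRingEnd ℂ) a * z) := by
  have h0 := one_sub_conj_mul_ne_zero ha hz
  rw [phi]
  field_simp
  ring

lemma phi_phi {a z : ℂ} (ha : ‖a‖ < 1) (hz : ‖z‖ < 1) : phi a (phi a z) = z := by
  have h0 := one_sub_conj_mul_ne_zero ha hz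
  have h1 := one_sub_conj_mul_ne_zero ha ha
  rw [phi, one_sub_conj_mul_phi ha hz, div_eq_iff (div_ne_zero h1 h0), phi, ← mul_div_assoc,
    eq_div_iff h0, sub_mul, div_mul_cancel₀ _ h0]
  ring

lemma psi_mul_psi_phi {a z : ℂ} (ha : ‖a‖ < 1) (hz : ‖z‖ < 1) :
    psiFun a z * psiFun a (phi a z) = 1 := by
  have h0 := one_sub_conj_mul_ne_zero ha hz
  have h1 := one_sub_conj_mul_ne_zero ha ha
  have hpos : 0 < 1 - ‖a‖ ^ 2 := by nlinarith [norm_nonneg a]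
  have h2 : (Real.sqrt (1 - ‖a‖ ^ 2) : ℂ) ^ 2 = 1 - (starRingEnd ℂ) a * a := by
    rw [← Complex.ofReal_pow, Real.sq_sqrt hpos.le, Complex.conj_mul']
    push_cast
    rfl
  rw [psiFun, psiFun, one_sub_conj_mul_phi ha hz]
  field_simp
  exact h2

lemma tsum_norm_sq_eq (x : lp (fun _ : ℕ => ℂ) 2) : ∑' n, ‖x n‖ ^ 2 = ‖x‖ ^ 2 := by
  have h := lp.norm_rpow_eq_tsum (p := 2) (by norm_num) x
  simpa using h.symm

/-- For `a` in the open unit disk: (i) `W_a(W_a f) = f` on the disk for every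
function `f`; (ii) if `f ∈ H²` then `W_a f ∈ H²` and `‖W_a f‖ = ‖f‖`.
Hence `W_a` is a selfadjoint unitary operator (a symmetry) of `H²`. -/
theorem stmt5 (a : ℂ) (ha : ‖a‖ < 1) :
    (∀ f : ℂ → ℂ, ∀ z : ℂ, ‖z‖ < 1 → Wop a (Wop a f) z = f z) ∧
    (∀ (f : ℂ → ℂ) (c : ℕ → ℂ), IsH2Rep f c →
      ∃ d : ℕ → ℂ, IsH2Rep (Wop a f) d ∧ (∑' n, ‖d n‖ ^ 2) = ∑' n, ‖c n‖ ^ 2) := by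
  refine ⟨fun f z hz => ?_, fun f c hf => ?_⟩
  · rw [Wop, Wop, phi_phi ha hz, ← mul_assoc, psi_mul_psi_phi ha hz, one_mul]
  · obtain ⟨hsum, hfc⟩ := hf
    let x : lp (fun _ : ℕ => ℂ) 2 := ⟨c, memℓp_gen (by simpa using hsum)⟩
    obtain ⟨v, hv, hev⟩ := exists_orthonormal ha
    obtain ⟨L, hL⟩ := exists_isometry v hv
    refine ⟨fun n => L x n, ⟨?_, fun z hz => ?_⟩, ?_⟩
    · simpa using (lp.memℓp (L x)).summable (by norm_num)
    · have h : inner ℂ (szego z hz) (L x) = Wop a f z := by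
        refine (hL x (szego z hz)).unique ?_
        refine ((hfc _ (norm_phi_lt_one ha hz)).mul_left (psiFun a z)).congr_fun ?_
        intro n
        rw [hev]
        change c n * _ = _
        ring
      rw [← h]
      exact inner_szego hz (L x)
    · rw [tsum_norm_sq_eq, L.norm_map, ← tsum_norm_sq_eq]
end

section
/- Let a, b ∈ 𝔻. If ‖f ∘ φ_a‖ = ‖f ∘ φ_b‖ for every f ∈ H², then a = b. (Equivalently, |C_a| = |C_b| implies a = b, where |C_a| is the modulus of the composition operator C_a f = f ∘ φ_a on H².) -/
/-- Membership in the Hardy space `H²` of the disk. -/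
def MemH2 (f : ℂ → ℂ) : Prop := ∃ c : ℕ → ℂ, IsH2Rep f c

/-- The Taylor coefficients at `0` of `φ_a + w`. -/
noncomputable def mobiusCoeff (a w : ℂ) : ℕ → ℂ
  | 0 => a + w
  | n + 1 => -(1 - a * (starRingEnd ℂ) a) * (starRingEnd ℂ) a ^ n

lemma mobiusCoeff_normSq (a w : ℂ) (ha : ‖a‖ < 1) :
    HasSum (fun n => ‖mobiusCoeff a w n‖ ^ 2) (‖a + w‖ ^ 2 + (1 - ‖a‖ ^ 2)) := by
  have hsq : ‖a‖ ^ 2 < 1 := by nlinarith [norm_nonneg a]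
  have hg := (hasSum_geometric_of_lt_one (sq_nonneg ‖a‖) hsq).mul_left ((1 - ‖a‖ ^ 2) ^ 2)
  have hval : (1 - ‖a‖ ^ 2) ^ 2 * (1 - ‖a‖ ^ 2)⁻¹ = 1 - ‖a‖ ^ 2 := by
    have : 1 - ‖a‖ ^ 2 ≠ 0 := by linarith
    field_simp
  rw [hval] at hg
  have hnorm : ‖1 - a * (starRingEnd ℂ) a‖ ^ 2 = (1 - ‖a‖ ^ 2) ^ 2 := by
    have : (1 : ℂ) - a * (starRingEnd ℂ) a = ((1 - ‖a‖ ^ 2 : ℝ) : ℂ) := by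
      rw [Complex.mul_conj']; push_cast; ring
    rw [this, Complex.norm_real, Real.norm_eq_abs, sq_abs]
  rw [← hasSum_nat_add_iff' 1]
  simp only [Finset.sum_range_one, mobiusCoeff, add_sub_cancel_left]
  refine (congrArg (HasSum · _) (funext fun n => ?_)).mpr hg
  rw [norm_mul, norm_neg, norm_pow, RCLike.norm_conj, mul_pow, hnorm]
  ring

lemma mobiusCoeff_isH2Rep (a w : ℂ) (ha : ‖a‖ < 1) :
    IsH2Rep (fun z => phi a z + w) (mobiusCoeff a w) := by
  refine ⟨(mobiusCoeff_normSq a w ha).summable, fun z hz => ?_⟩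
  have hlt : ‖(starRingEnd ℂ) a * z‖ < 1 := by
    rw [norm_mul, RCLike.norm_conj]
    nlinarith [norm_nonneg a, norm_nonneg z]
  have hne : 1 - (starRingEnd ℂ) a * z ≠ 0 := by
    intro h0
    rw [← sub_eq_zero.mp h0] at hlt
    simp at hlt
  have hg := (hasSum_geometric_of_norm_lt_one hlt).mul_left
    (-(1 - a * (starRingEnd ℂ) a) * z)
  rw [← hasSum_nat_add_iff' 1]
  simp only [Finset.sum_range_one, mobiusCoeff, pow_zero, mul_one]
  have hval : phi a z + w - (a + w)
      = -(1 - a * (starRingEnd ℂ) a) * z * (1 - (starRingEnd ℂ) a * z)⁻¹ := by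
    rw [phi, ← div_eq_mul_inv, add_sub_add_right_eq_sub, div_sub' hne]
    congr 1
    ring
  rw [hval]
  refine (congrArg (HasSum · _) (funext fun n => ?_)).mpr hg
  rw [mul_pow]
  ring

lemma memH2_add_const (w : ℂ) : MemH2 (fun z => z + w) := by
  refine ⟨fun n => if n = 0 then w else if n = 1 then 1 else 0, ?_, fun z _ => ?_⟩
  · refine summable_of_ne_finset_zero (s := Finset.range 2) fun n hn => ?_
    have : 2 ≤ n := by simpa [Nat.succ_le_iff] using hn
    simp [show n ≠ 0 by omega, show n ≠ 1 by omega]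
  · have := hasSum_sum_of_ne_finset_zero (L := .unconditional ℕ) (s := Finset.range 2)
      (f := fun n => (if n = 0 then w else if n = 1 then 1 else 0) * z ^ n) fun n hn => by
        have : 2 ≤ n := by simpa [Nat.succ_le_iff] using hn
        simp [show n ≠ 0 by omega, show n ≠ 1 by omega]
    simpa [Finset.sum_range_succ, add_comm] using this

/-- If `‖f ∘ φ_a‖ = ‖f ∘ φ_b‖` for every `f ∈ H²` (the H² norms, computed from the
Taylor coefficients), then `a = b`; i.e., `|C_a| = |C_b|` implies `a = b`. -/
theorem stmt9 (a b : ℂ) (ha : ‖a‖ < 1) (hb : ‖b‖ < 1)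
    (h : ∀ f : ℂ → ℂ, MemH2 f → ∀ c d : ℕ → ℂ,
      IsH2Rep (fun z => f (phi a z)) c → IsH2Rep (fun z => f (phi b z)) d →
      (∑' n, ‖c n‖ ^ 2) = ∑' n, ‖d n‖ ^ 2) :
    a = b := by
  have key (w : ℂ) : ‖a + w‖ ^ 2 + (1 - ‖a‖ ^ 2) = ‖b + w‖ ^ 2 + (1 - ‖b‖ ^ 2) := by
    have := h (fun z => z + w) (memH2_add_const w) _ _
      (mobiusCoeff_isH2Rep a w ha) (mobiusCoeff_isH2Rep b w hb)
    rwa [(mobiusCoeff_normSq a w ha).tsum_eq, (mobiusCoeff_normSq b w hb).tsum_eq] at this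
  have h1 := key 1
  have hI := key Complex.I
  simp only [← Complex.normSq_eq_norm_sq, Complex.normSq_apply, Complex.add_re, Complex.add_im,
    Complex.one_re, Complex.one_im, Complex.I_re, Complex.I_im] at h1 hI
  apply Complex.ext <;> linarith
end

section
/- Let a, b ∈ 𝔻. If N(C_a − 1) = N(C_b − 1) (as subsets of H²), then a = b; likewise, if N(C_a + 1) = N(C_b + 1), then a = b. In other words, the maps a ↦ N(C_a − 1) and a ↦ N(C_a + 1) from 𝔻 to subspaces of H² are one to one. -/
/-- `N(C_a − 1) = {f ∈ H² : f ∘ φ_a = f}`. -/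
def Nminus (a : ℂ) : Set (ℂ → ℂ) :=
  {f | MemH2 f ∧ ∀ z : ℂ, ‖z‖ < 1 → f (phi a z) = f z}

/-- `N(C_a + 1) = {f ∈ H² : f ∘ φ_a = −f}`. -/
def Nplus (a : ℂ) : Set (ℂ → ℂ) :=
  {f | MemH2 f ∧ ∀ z : ℂ, ‖z‖ < 1 → f (phi a z) = - f z}

lemma MemH2.add {f g : ℂ → ℂ} (hf : MemH2 f) (hg : MemH2 g) :
    MemH2 (fun z => f z + g z) := by
  obtain ⟨c, hc, hc'⟩ := hf
  obtain ⟨d, hd, hd'⟩ := hg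
  refine ⟨fun n => c n + d n, ?_, fun z hz => ?_⟩
  · refine Summable.of_nonneg_of_le (fun n => by positivity) (fun n => ?_)
      ((hc.mul_left 2).add (hd.mul_left 2))
    have h := norm_add_le (c n) (d n)
    nlinarith [norm_nonneg (c n + d n), sq_nonneg (‖c n‖ - ‖d n‖),
      norm_nonneg (c n), norm_nonneg (d n)]
  · simpa only [add_mul] using (hc' z hz).add (hd' z hz)

lemma MemH2.const_mul {f : ℂ → ℂ} (hf : MemH2 f) (k : ℂ) : MemH2 (fun z => k * f z) := by
  obtain ⟨c, hc, hc'⟩ := hf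
  refine ⟨fun n => k * c n, ?_, fun z hz => ?_⟩
  · simpa only [norm_mul, mul_pow] using hc.mul_left (‖k‖ ^ 2)
  · simpa only [mul_assoc] using (hc' z hz).mul_left k

lemma MemH2.id_mul {f : ℂ → ℂ} (hf : MemH2 f) : MemH2 (fun z => z * f z) := by
  obtain ⟨c, hc, hc'⟩ := hf
  refine ⟨fun n => Nat.casesOn n 0 c, ?_, fun z hz => ?_⟩
  · rw [← summable_nat_add_iff 1]
    exact hc
  · rw [← hasSum_nat_add_iff' 1]
    have h := (hc' z hz).mul_left z
    simpa [pow_succ, mul_assoc, mul_comm, mul_left_comm] using h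

/-- The geometric (Szegő) kernel `1 / (1 - w * z)` is in `H²`, with coefficients `w ^ n`. -/
lemma memH2_kernel {w : ℂ} (hw : ‖w‖ < 1) : MemH2 (fun z => (1 - w * z)⁻¹) := by
  refine ⟨fun n => w ^ n, ?_, fun z hz => ?_⟩
  · have h : ‖w‖ ^ 2 < 1 := by nlinarith [norm_nonneg w]
    have := summable_geometric_of_lt_one (by positivity) h
    simpa only [norm_pow, ← pow_mul, mul_comm] using this
  · have h : ‖w * z‖ < 1 := by
      rw [norm_mul]
      nlinarith [norm_nonneg w, norm_nonneg z]
    simpa only [mul_pow] using hasSum_geometric_of_norm_lt_one h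

lemma memH2_phi {a : ℂ} (ha : ‖a‖ < 1) : MemH2 (phi a) := by
  have hk : MemH2 (fun z => (1 - (starRingEnd ℂ) a * z)⁻¹) :=
    memH2_kernel (by simpa using ha)
  convert (hk.const_mul a).add (hk.id_mul.const_mul (-1)) using 2 with z
  rw [phi, div_eq_mul_inv]
  ring

lemma memH2_id : MemH2 (fun z => z) := by
  simpa using (memH2_kernel (w := 0) (by simp)).id_mul

lemma phi_zero (a : ℂ) : phi a 0 = a := by simp [phi]

lemma id_mul_phi_mem {a : ℂ} (ha : ‖a‖ < 1) : (fun z => z * phi a z) ∈ Nminus a :=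
  ⟨(memH2_phi ha).id_mul, fun z hz => by simp only [phi_phi ha hz, mul_comm]⟩

lemma id_sub_phi_mem {a : ℂ} (ha : ‖a‖ < 1) : (fun z => z - phi a z) ∈ Nplus a := by
  refine ⟨?_, fun z hz => by simp only [phi_phi ha hz, neg_sub]⟩
  simpa [sub_eq_add_neg] using memH2_id.add ((memH2_phi ha).const_mul (-1))

lemma eq_zero_or_eq_of_Nminus {a b : ℂ} (ha : ‖a‖ < 1) (hb : ‖b‖ < 1)
    (h : Nminus a = Nminus b) : b = 0 ∨ a = b := by
  have hm : (fun z => z * phi a z) ∈ Nminus b := h ▸ id_mul_phi_mem ha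
  have h0 := hm.2 0 (by simp)
  simp only [phi_zero, zero_mul, mul_eq_zero] at h0
  refine h0.imp_right fun h1 => ?_
  rw [phi, div_eq_zero_iff] at h1
  exact sub_eq_zero.mp (h1.resolve_right (one_sub_conj_mul_ne_zero ha hb))

/-- For `a, b` in the open unit disk, `N(C_a − 1) = N(C_b − 1)` implies `a = b`,
and `N(C_a + 1) = N(C_b + 1)` implies `a = b`: the maps `a ↦ N(C_a − 1)` and
`a ↦ N(C_a + 1)` are one to one. -/
theorem stmt12 (a b : ℂ) (ha : ‖a‖ < 1) (hb : ‖b‖ < 1) :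
    (Nminus a = Nminus b → a = b) ∧ (Nplus a = Nplus b → a = b) := by
  refine ⟨fun h => ?_, fun h => ?_⟩
  · rcases eq_zero_or_eq_of_Nminus ha hb h with h1 | h1
    · rcases eq_zero_or_eq_of_Nminus hb ha h.symm with h2 | h2
      · rw [h1, h2]
      · exact h2.symm
    · exact h1
  · have hm : (fun z => z - phi a z) ∈ Nplus b := h ▸ id_sub_phi_mem ha
    have h0 := hm.2 0 (by simp)
    simp only [phi_zero, zero_sub, neg_neg] at h0
    have hne : 1 - b * (starRingEnd ℂ) a ≠ 0 := by
      rw [mul_comm b]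
      exact one_sub_conj_mul_ne_zero ha hb
    have h1 : (b - a) * (2 - (starRingEnd ℂ) a * b) = 0 := by
      rw [phi] at h0
      field_simp at h0
      linear_combination h0
    rcases mul_eq_zero.mp h1 with h2 | h2
    · exact (sub_eq_zero.mp h2).symm
    · exfalso
      have h3 : ‖(starRingEnd ℂ) a * b‖ = 2 := by rw [← sub_eq_zero.mp h2]; simp
      rw [norm_mul, RCLike.norm_conj] at h3
      nlinarith [norm_nonneg a, norm_nonneg b]
end

section
/- Let a ∈ 𝔻 with a ≠ 0. Then: (i) if f ∈ H² is odd and ⟨f, g⟩ = 0 for every g ∈ H² with g ∘ φ_a = g, then f = 0; (ii) if f ∈ H² is even and ⟨f, g⟩ = 0 for every g ∈ H² with g ∘ φ_a = −g, then f = 0. That is, N(C_0 − 1)^⊥ ∩ N(C_a − 1)^⊥ = {0} = N(C_0 + 1)^⊥ ∩ N(C_a + 1)^⊥. -/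
open Filter Topology

namespace HardyDisk

/-! ### The Möbius maps -/

lemma one_sub_ne {a z : ℂ} (ha : ‖a‖ < 1) (hz : ‖z‖ < 1) :
    1 - (starRingEnd ℂ) a * z ≠ 0 := by
  intro h
  have h1 : (starRingEnd ℂ) a * z = 1 := (sub_eq_zero.mp h).symm
  have h2 : ‖a‖ * ‖z‖ = 1 := by
    simpa using congrArg norm h1
  nlinarith [norm_nonneg a, norm_nonneg z]

/-- The Schwarz–Pick identity for the involution `φ_a`. -/
lemma one_sub_norm_phi {a z : ℂ} (ha : ‖a‖ < 1) (hz : ‖z‖ < 1) :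
    1 - ‖phi a z‖ ^ 2 =
      (1 - ‖a‖ ^ 2) * (1 - ‖z‖ ^ 2) / ‖1 - (starRingEnd ℂ) a * z‖ ^ 2 := by
  have h0 : ‖1 - (starRingEnd ℂ) a * z‖ ^ 2 ≠ 0 :=
    pow_ne_zero _ (norm_ne_zero_iff.mpr (one_sub_ne ha hz))
  have key : ‖1 - (starRingEnd ℂ) a * z‖ ^ 2 - ‖a - z‖ ^ 2 =
      (1 - ‖a‖ ^ 2) * (1 - ‖z‖ ^ 2) := by
    simp only [Complex.sq_norm, Complex.normSq_apply, Complex.sub_re, Complex.sub_im,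
      Complex.mul_re, Complex.mul_im, Complex.conj_re, Complex.conj_im, Complex.one_re,
      Complex.one_im]
    ring
  rw [← key, phi, norm_div, div_pow, sub_div, div_self h0]

lemma norm_phi_lt {a z : ℂ} (ha : ‖a‖ < 1) (hz : ‖z‖ < 1) : ‖phi a z‖ < 1 := by
  have h1 := one_sub_norm_phi ha hz
  have h0 : 0 < ‖1 - (starRingEnd ℂ) a * z‖ := norm_pos_iff.mpr (one_sub_ne ha hz)
  have h2 : 0 < (1 - ‖a‖ ^ 2) * (1 - ‖z‖ ^ 2) / ‖1 - (starRingEnd ℂ) a * z‖ ^ 2 := by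
    have := norm_nonneg a
    have := norm_nonneg z
    apply div_pos (mul_pos _ _) (by positivity) <;> nlinarith
  nlinarith [norm_nonneg (phi a z)]

lemma one_sub_norm_sq_ne {a : ℂ} (ha : ‖a‖ < 1) : 1 - (starRingEnd ℂ) a * a ≠ 0 :=
  one_sub_ne ha ha

lemma one_sub_conj_phi {a z : ℂ} (ha : ‖a‖ < 1) (hz : ‖z‖ < 1) :
    1 - (starRingEnd ℂ) a * phi a z =
      (1 - (starRingEnd ℂ) a * a) / (1 - (starRingEnd ℂ) a * z) := by
  have h0 := one_sub_ne ha hz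
  rw [phi]
  field_simp
  ring

lemma phi_phi {a z : ℂ} (ha : ‖a‖ < 1) (hz : ‖z‖ < 1) : phi a (phi a z) = z := by
  have h0 := one_sub_ne ha hz
  have h1 := one_sub_norm_sq_ne ha
  have h2 : phi a (phi a z) = (a - phi a z) / (1 - (starRingEnd ℂ) a * phi a z) := rfl
  rw [h2, one_sub_conj_phi ha hz, phi, div_div_eq_mul_div, div_eq_iff h1, sub_mul,
    div_mul_cancel₀ _ h0]
  ring

/-- The hyperbolic automorphism `ψ_a = φ_0 ∘ φ_a`, that is, `z ↦ (z - a)/(1 - conj a · z)`. -/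
noncomputable def psi (a z : ℂ) : ℂ := -phi a z

lemma norm_psi_lt {a z : ℂ} (ha : ‖a‖ < 1) (hz : ‖z‖ < 1) : ‖psi a z‖ < 1 := by
  rw [psi, norm_neg]; exact norm_phi_lt ha hz

lemma norm_iter_lt {a z : ℂ} (ha : ‖a‖ < 1) (hz : ‖z‖ < 1) (n : ℕ) :
    ‖(psi a)^[n] z‖ < 1 := by
  induction n with
  | zero => simpa using hz
  | succ n ih => rw [Function.iterate_succ_apply']; exact norm_psi_lt ha ih

/-- The Poisson kernel `(1 - |z|²)/|e - z|²` at the repelling boundary fixed point `e = a/|a|` of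
`ψ_a` is multiplied by `(1 - |a|)/(1 + |a|)` under `ψ_a`. -/
lemma poisson_psi {a e z : ℂ} (ha : ‖a‖ < 1) (he : (starRingEnd ℂ) a * e = ‖a‖)
    (hae : a = ‖a‖ * e) (hz : ‖z‖ < 1) :
    (1 - ‖psi a z‖ ^ 2) / ‖e - psi a z‖ ^ 2 =
      (1 - ‖a‖) / (1 + ‖a‖) * ((1 - ‖z‖ ^ 2) / ‖e - z‖ ^ 2) := by
  have h0 := one_sub_ne ha hz
  have h1 : e - psi a z = (1 + ‖a‖) * (e - z) / (1 - (starRingEnd ℂ) a * z) := by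
    rw [psi, phi, eq_div_iff h0, sub_mul, neg_mul, div_mul_cancel₀ _ h0]
    linear_combination (-z) * he + hae
  have h2 : ‖(1 + ‖a‖ : ℂ)‖ = 1 + ‖a‖ := by
    have := norm_nonneg a
    rw [← Complex.ofReal_one, ← Complex.ofReal_add, Complex.norm_real, Real.norm_eq_abs,
      abs_of_nonneg (by positivity)]
  have h3 : ‖1 - (starRingEnd ℂ) a * z‖ ≠ 0 := norm_ne_zero_iff.mpr h0
  have h4 : 1 + ‖a‖ ≠ 0 := by have := norm_nonneg a; positivity
  rw [h1, psi, norm_neg, one_sub_norm_phi ha hz, norm_div, norm_mul, h2]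
  by_cases h5 : ‖e - z‖ = 0
  · simp [h5]
  · field_simp
    ring

lemma orbit_tendsto {a z : ℂ} (ha : ‖a‖ < 1) (ha0 : a ≠ 0) (hz : ‖z‖ < 1) :
    Tendsto (fun n : ℕ => 1 - ‖(psi a)^[n] z‖ ^ 2) atTop (𝓝 0) := by
  have hap : 0 < ‖a‖ := norm_pos_iff.mpr ha0
  have hac : (‖a‖ : ℂ) ≠ 0 := by exact_mod_cast hap.ne'
  set e : ℂ := a / ‖a‖ with he_def
  have hae : a = ‖a‖ * e := by rw [he_def]; field_simp
  have he : (starRingEnd ℂ) a * e = ‖a‖ := by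
    rw [he_def, ← mul_div_assoc, Complex.conj_mul']
    field_simp
  have hen : ‖e‖ = 1 := by
    rw [he_def, norm_div, Complex.norm_real, norm_norm, div_self hap.ne']
  set l : ℝ := (1 - ‖a‖) / (1 + ‖a‖) with hl
  have hP : ∀ n : ℕ, (1 - ‖(psi a)^[n] z‖ ^ 2) / ‖e - (psi a)^[n] z‖ ^ 2 =
      l ^ n * ((1 - ‖z‖ ^ 2) / ‖e - z‖ ^ 2) := by
    intro n
    induction n with
    | zero => simp
    | succ n ih =>
      rw [Function.iterate_succ_apply', poisson_psi ha he hae (norm_iter_lt ha hz n), ih, pow_succ]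
      ring
  have hl0 : 0 ≤ l := div_nonneg (by linarith) (by linarith)
  have hl1 : l < 1 := by rw [hl, div_lt_one (by linarith)]; linarith
  have hlim : Tendsto (fun n : ℕ => 4 * (l ^ n * ((1 - ‖z‖ ^ 2) / ‖e - z‖ ^ 2))) atTop (𝓝 0) := by
    simpa using ((tendsto_pow_atTop_nhds_zero_of_lt_one hl0 hl1).mul_const
      ((1 - ‖z‖ ^ 2) / ‖e - z‖ ^ 2)).const_mul 4
  refine squeeze_zero (fun n => ?_) (fun n => ?_) hlim
  · have := norm_iter_lt ha hz n
    nlinarith [norm_nonneg ((psi a)^[n] z)]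
  · rw [← hP n]
    have hv := norm_iter_lt ha hz n
    set v := (psi a)^[n] z
    have h1 : ‖e - v‖ ≤ 2 := (norm_sub_le _ _).trans (by linarith)
    have h2 : 0 < ‖e - v‖ := by
      have := norm_sub_norm_le e v
      linarith
    rw [← mul_div_assoc, le_div_iff₀ (by positivity)]
    have h3 : 0 ≤ 1 - ‖v‖ ^ 2 := by nlinarith [norm_nonneg v]
    nlinarith [mul_le_mul_of_nonneg_left (show ‖e - v‖ ^ 2 ≤ 4 by nlinarith) h3]

/-! ### Power series with square-summable coefficients -/

lemma coeff_zero_of_hasSum_zero {u : ℕ → ℂ}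
    (h : ∀ z : ℂ, ‖z‖ < 1 → HasSum (fun n => u n * z ^ n) 0) (n : ℕ) : u n = 0 := by
  have hp : HasFPowerSeriesOnBall (fun _ : ℂ => (0 : ℂ))
      (FormalMultilinearSeries.ofScalars ℂ u) 0 1 := by
    refine ⟨?_, by norm_num, ?_⟩
    · refine ENNReal.le_of_forall_nnreal_lt fun r hr => ?_
      have hr' : (r : ℝ) < 1 := by exact_mod_cast hr
      apply FormalMultilinearSeries.le_radius_of_tendsto (l := 0)
      have h1 := (h (r : ℂ) (by simpa using hr')).summable.tendsto_atTop_zero.norm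
      simpa [FormalMultilinearSeries.ofScalars_norm] using h1
    · intro y hy
      have hy' : ‖y‖ < 1 := by
        have : ‖y‖ₑ < 1 := by simpa using hy
        rw [← ofReal_norm, ENNReal.ofReal_lt_one] at this
        exact this
      simpa [FormalMultilinearSeries.ofScalars_apply_eq, mul_comm] using h y hy'
  have h2 := hp.hasFPowerSeriesAt.eq_zero
  have h3 : (FormalMultilinearSeries.ofScalars ℂ u).coeff n = 0 := by rw [h2]; rfl
  simpa [FormalMultilinearSeries.coeff_ofScalars] using h3

/-- The backward shift of `Σ c_n z^n`, as a function. -/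
noncomputable def shift (c : ℕ → ℂ) (z : ℂ) : ℂ := ∑' n, c (n + 1) * z ^ n

/-- Weighted AM-GM: a Cauchy–Schwarz substitute that is summable term by term. -/
lemma norm_term_le (x y : ℂ) (z : ℂ) (n : ℕ) {s : ℝ} (hs : 0 < s) (hy : ‖y‖ = ‖z‖ ^ n) :
    ‖x * y‖ ≤ (s * ‖x‖ ^ 2 + s⁻¹ * (‖z‖ ^ 2) ^ n) / 2 := by
  rw [norm_mul, hy, ← pow_mul, mul_comm 2 n, pow_mul]
  have h := mul_nonneg (inv_nonneg.mpr hs.le) (sq_nonneg (s * ‖x‖ - ‖z‖ ^ n))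
  have h2 : s⁻¹ * (s * ‖x‖ - ‖z‖ ^ n) ^ 2 =
      s * ‖x‖ ^ 2 - 2 * (‖x‖ * ‖z‖ ^ n) + s⁻¹ * (‖z‖ ^ n) ^ 2 := by
    field_simp
    ring
  linarith

lemma hasSum_shift {c : ℕ → ℂ} (hc : Summable (fun n => ‖c n‖ ^ 2)) {z : ℂ} (hz : ‖z‖ < 1) :
    HasSum (fun n => c (n + 1) * z ^ n) (shift c z) := by
  have hz2 : ‖z‖ ^ 2 < 1 := by nlinarith [norm_nonneg z]
  refine (Summable.of_norm_bounded (g := fun n => (1 * ‖c (n + 1)‖ ^ 2 +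
    (1 : ℝ)⁻¹ * (‖z‖ ^ 2) ^ n) / 2) ?_ ?_).hasSum
  · exact ((((summable_nat_add_iff 1).mpr hc).mul_left 1).add
      ((summable_geometric_of_lt_one (by positivity) hz2).mul_left _)).div_const 2
  · exact fun n => norm_term_le _ _ z n one_pos (norm_pow z n)

/-- The growth estimate `(1 - |z|²)|h(z)| = O((1 - |z|²)^{1/2})` for the backward shift `h` of an
element of `H²`. -/
lemma growth {c : ℕ → ℂ} (hc : Summable (fun n => ‖c n‖ ^ 2)) :
    ∃ M : ℝ, ∀ z : ℂ, ‖z‖ < 1 →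
      (1 - ‖z‖ ^ 2) * ‖shift c z‖ ≤ M * Real.sqrt (1 - ‖z‖ ^ 2) := by
  have hc1 : Summable (fun n => ‖c (n + 1)‖ ^ 2) := (summable_nat_add_iff 1).mpr hc
  refine ⟨((∑' n, ‖c (n + 1)‖ ^ 2) + 1) / 2, fun z hz => ?_⟩
  have hz2 : ‖z‖ ^ 2 < 1 := by nlinarith [norm_nonneg z]
  set r := Real.sqrt (1 - ‖z‖ ^ 2) with hr
  have hr0 : 0 < r := Real.sqrt_pos.mpr (by linarith)
  have hr2 : 1 - ‖z‖ ^ 2 = r ^ 2 := (Real.sq_sqrt (by linarith)).symm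
  -- the weight `s = 1/√(1 - |z|²)` balances the two terms of the AM-GM bound
  have hb : HasSum (fun n => (r⁻¹ * ‖c (n + 1)‖ ^ 2 + r⁻¹⁻¹ * (‖z‖ ^ 2) ^ n) / 2)
      ((r⁻¹ * (∑' n, ‖c (n + 1)‖ ^ 2) + r⁻¹⁻¹ * (1 - ‖z‖ ^ 2)⁻¹) / 2) :=
    ((hc1.hasSum.mul_left _).add
      ((hasSum_geometric_of_lt_one (by positivity) hz2).mul_left _)).div_const 2
  have hle := tsum_of_norm_bounded hb
    (fun n => norm_term_le (c (n + 1)) (z ^ n) z n (inv_pos.mpr hr0) (norm_pow z n))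
  calc (1 - ‖z‖ ^ 2) * ‖shift c z‖
      ≤ (1 - ‖z‖ ^ 2) * ((r⁻¹ * (∑' n, ‖c (n + 1)‖ ^ 2) + r⁻¹⁻¹ * (1 - ‖z‖ ^ 2)⁻¹) / 2) :=
        mul_le_mul_of_nonneg_left hle (by linarith)
    _ = _ := by
        rw [hr2]
        field_simp

lemma orbit_shift_tendsto {a z : ℂ} {c : ℕ → ℂ} (ha : ‖a‖ < 1) (ha0 : a ≠ 0) (hz : ‖z‖ < 1)
    (hc : Summable (fun n => ‖c n‖ ^ 2)) :
    Tendsto (fun n : ℕ => (1 - ‖(psi a)^[n] z‖ ^ 2) * ‖shift c ((psi a)^[n] z)‖) atTop (𝓝 0) := by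
  obtain ⟨M, hM⟩ := growth hc
  have h1 : Tendsto (fun n : ℕ => M * Real.sqrt (1 - ‖(psi a)^[n] z‖ ^ 2)) atTop (𝓝 0) := by
    simpa using ((orbit_tendsto ha ha0 hz).sqrt).const_mul M
  refine squeeze_zero (fun n => ?_) (fun n => hM _ (norm_iter_lt ha hz n)) h1
  have := norm_iter_lt ha hz n
  exact mul_nonneg (by nlinarith [norm_nonneg ((psi a)^[n] z)]) (norm_nonneg _)

/-! ### The functional equation -/

/-- The kernel `z/(1 - conj w · z)`, which represents `f ↦ (f(w) - f(0))/w` in `H²`. -/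
noncomputable def ker (w z : ℂ) : ℂ := z / (1 - (starRingEnd ℂ) w * z)

lemma hasSum_succ {u : ℕ → ℂ} {s : ℂ} (h : HasSum (fun n => u (n + 1)) s) :
    HasSum u (u 0 + s) := by
  have := (hasSum_nat_add_iff (f := u) 1).mp h
  simpa [add_comm] using this

/-- The composition `ker w ∘ φ_a`, expanded in powers of `conj b · z` with `b = φ_a(w)`. -/
lemma ker_phi {a w z : ℂ} (ha : ‖a‖ < 1) (hw : ‖w‖ < 1) (hz : ‖z‖ < 1) :
    ker w (phi a z) = (a - z) / (1 - (starRingEnd ℂ) w * a) *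
      (1 - (starRingEnd ℂ) (phi a w) * z)⁻¹ := by
  have h1 := one_sub_ne ha hz
  have h2 := one_sub_ne hw ha
  have h3 := one_sub_ne hw (norm_phi_lt ha hz)
  have h4 := one_sub_ne (norm_phi_lt ha hw) hz
  have hb : (starRingEnd ℂ) (phi a w) =
      ((starRingEnd ℂ) a - (starRingEnd ℂ) w) / (1 - (starRingEnd ℂ) w * a) := by
    simp [phi, mul_comm]
  have h5 : phi a z * (1 - (starRingEnd ℂ) a * z) = a - z := by
    rw [phi, div_mul_cancel₀ _ h1]
  have h6 : (1 - (starRingEnd ℂ) (phi a w) * z) * (1 - (starRingEnd ℂ) w * a) =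
      (1 - (starRingEnd ℂ) w * phi a z) * (1 - (starRingEnd ℂ) a * z) := by
    rw [hb]
    field_simp
    linear_combination (starRingEnd ℂ w) * h5
  rw [ker, ← div_eq_mul_inv, div_div, div_eq_div_iff h3 (mul_ne_zero h2 h4), ← h5,
    mul_comm (1 - (starRingEnd ℂ) w * a), h6]
  ring

/-- Taylor coefficients of `ker w + τ • ker w ∘ φ_a`. -/
noncomputable def coeffs (a w τ : ℂ) : ℕ → ℂ
  | 0 => τ * (a / (1 - (starRingEnd ℂ) w * a))
  | n + 1 => ((starRingEnd ℂ) w) ^ n +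
      τ * ((a * (starRingEnd ℂ) (phi a w) - 1) / (1 - (starRingEnd ℂ) w * a)) *
        ((starRingEnd ℂ) (phi a w)) ^ n

lemma isH2Rep_test {a w : ℂ} (τ : ℂ) (ha : ‖a‖ < 1) (hw : ‖w‖ < 1) :
    IsH2Rep (fun z => ker w z + τ * ker w (phi a z)) (coeffs a w τ) := by
  have hb := norm_phi_lt ha hw
  constructor
  · rw [← summable_nat_add_iff 1]
    set K := τ * ((a * (starRingEnd ℂ) (phi a w) - 1) / (1 - (starRingEnd ℂ) w * a)) with hK
    have hs : Summable (fun n : ℕ => 2 * (‖w‖ ^ 2) ^ n + 2 * ‖K‖ ^ 2 * (‖phi a w‖ ^ 2) ^ n) :=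
      ((summable_geometric_of_lt_one (by positivity)
        (by nlinarith [norm_nonneg w])).mul_left _).add
      ((summable_geometric_of_lt_one (by positivity)
        (by nlinarith [norm_nonneg (phi a w)])).mul_left _)
    refine hs.of_nonneg_of_le (fun n => by positivity) (fun n => ?_)
    have h1 : ‖coeffs a w τ (n + 1)‖ ≤ ‖w‖ ^ n + ‖K‖ * ‖phi a w‖ ^ n := by
      refine (norm_add_le _ _).trans (le_of_eq ?_)
      simp [hK]
    have h2 : 2 * (‖w‖ ^ 2) ^ n + 2 * ‖K‖ ^ 2 * (‖phi a w‖ ^ 2) ^ n =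
        2 * (‖w‖ ^ n) ^ 2 + 2 * (‖K‖ * ‖phi a w‖ ^ n) ^ 2 := by ring
    rw [h2]
    refine (pow_le_pow_left₀ (norm_nonneg _) h1 2).trans ?_
    nlinarith [sq_nonneg (‖w‖ ^ n - ‖K‖ * ‖phi a w‖ ^ n)]
  · intro z hz
    have hg : ∀ v : ℂ, ‖v‖ < 1 → HasSum (fun n : ℕ => ((starRingEnd ℂ) v * z) ^ n)
        (1 - (starRingEnd ℂ) v * z)⁻¹ := by
      intro v hv
      apply hasSum_geometric_of_norm_lt_one
      rw [norm_mul, Complex.norm_conj]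
      nlinarith [norm_nonneg v, norm_nonneg z]
    have h1 := ((hg w hw).mul_left z).add ((hg _ hb).mul_left
      (τ * ((a * (starRingEnd ℂ) (phi a w) - 1) / (1 - (starRingEnd ℂ) w * a)) * z))
    have h2 : HasSum (fun n => coeffs a w τ (n + 1) * z ^ (n + 1)) _ :=
      h1.congr_fun (fun n => by simp only [coeffs]; ring)
    have h3 := hasSum_succ (u := fun n => coeffs a w τ n * z ^ n) h2
    convert h3 using 1
    have h4 := mul_inv_cancel₀ (one_sub_ne hb hz)
    change ker w z + τ * ker w (phi a z) = _
    rw [ker_phi ha hw hz]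
    simp only [ker, coeffs]
    linear_combination (τ * (a / (1 - (starRingEnd ℂ) w * a))) * h4

/-- Pairing `f = Σ c_n z^n` with the test function `ker w + τ • ker w ∘ φ_a`. -/
lemma pairing {a w : ℂ} {c : ℕ → ℂ} (τ : ℂ) (hτ : (starRingEnd ℂ) τ = τ) (ha : ‖a‖ < 1)
    (hw : ‖w‖ < 1) (hc : Summable (fun n => ‖c n‖ ^ 2)) :
    ∑' n, c n * (starRingEnd ℂ) (coeffs a w τ n) =
      shift c w + τ * ((starRingEnd ℂ) a * c 0 / (1 - (starRingEnd ℂ) a * w) -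
        (1 - (starRingEnd ℂ) a * a) / (1 - (starRingEnd ℂ) a * w) ^ 2 * shift c (phi a w)) := by
  have h0 := one_sub_ne ha hw
  have hb := norm_phi_lt ha hw
  have h1 := (hasSum_shift hc hw).add ((hasSum_shift hc hb).mul_left
      (τ * (((starRingEnd ℂ) a * phi a w - 1) / (1 - (starRingEnd ℂ) a * w))))
  have h2 : HasSum (fun n => c (n + 1) * (starRingEnd ℂ) (coeffs a w τ (n + 1))) _ :=
    h1.congr_fun (fun n => by
      simp only [coeffs, map_add, map_mul, map_pow, map_div₀, map_sub, map_one,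
        Complex.conj_conj, hτ, mul_comm w]
      ring)
  have h3 := hasSum_succ (u := fun n => c n * (starRingEnd ℂ) (coeffs a w τ n)) h2
  rw [h3.tsum_eq]
  have h4 : (starRingEnd ℂ) a * phi a w - 1 =
      -((1 - (starRingEnd ℂ) a * a) / (1 - (starRingEnd ℂ) a * w)) := by
    rw [← one_sub_conj_phi ha hw]; ring
  rw [h4]
  simp only [coeffs, map_mul, map_div₀, map_sub, map_one, Complex.conj_conj, hτ, mul_comm w]
  field_simp
  ring

lemma coeff_parity {f : ℂ → ℂ} {c : ℕ → ℂ} {τ : ℂ} (hf : IsH2Rep f c)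
    (hpar : ∀ z : ℂ, ‖z‖ < 1 → f (-z) = -τ * f z) (n : ℕ) : c n * (-1) ^ n = -τ * c n := by
  have := coeff_zero_of_hasSum_zero (u := fun n => c n * (-1) ^ n - -τ * c n) (fun z hz => by
    have h1 := hf.2 (-z) (by simpa using hz)
    have h2 := (hf.2 z hz).mul_left (-τ)
    have h3 := h1.sub h2
    rw [hpar z hz, sub_self] at h3
    refine h3.congr_fun (fun n => ?_)
    rw [neg_pow z]; ring) n
  exact sub_eq_zero.mp this

/-- With `f(-z) = -τ f(z)` and `f` orthogonal to `N(C_a - τ)`, the backward shift `h` of `f`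
satisfies `h(w) = f(0) conj a / (1 - conj a · w) + ψ_a'(w) h(ψ_a(w))`. -/
lemma functional_eq {a : ℂ} {f : ℂ → ℂ} {c : ℕ → ℂ} {τ : ℂ} (ha : ‖a‖ < 1)
    (hτ : τ = 1 ∨ τ = -1) (hf : IsH2Rep f c)
    (hpar : ∀ z : ℂ, ‖z‖ < 1 → f (-z) = -τ * f z)
    (horth : ∀ (g : ℂ → ℂ) (d : ℕ → ℂ), IsH2Rep g d →
        (∀ z : ℂ, ‖z‖ < 1 → g (phi a z) = τ * g z) →
        (∑' n, c n * (starRingEnd ℂ) (d n)) = 0) {w : ℂ} (hw : ‖w‖ < 1) :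
    shift c w = c 0 * (starRingEnd ℂ) a / (1 - (starRingEnd ℂ) a * w) +
      (1 - (starRingEnd ℂ) a * a) / (1 - (starRingEnd ℂ) a * w) ^ 2 * shift c (psi a w) := by
  have hτ2 : τ * τ = 1 := by rcases hτ with rfl | rfl <;> norm_num
  have hτc : (starRingEnd ℂ) τ = τ := by rcases hτ with rfl | rfl <;> simp
  have h1 := horth _ _ (isH2Rep_test τ ha hw) (fun z hz => by
    simp only [phi_phi ha hz]
    linear_combination (-ker w (phi a z)) * hτ2)
  rw [pairing τ hτc ha hw hf.1] at h1
  have h2 : shift c (psi a w) = τ * shift c (phi a w) := by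
    rw [shift, shift, ← tsum_mul_left]
    congr 1
    ext n
    have := coeff_parity hf hpar (n + 1)
    rw [psi, neg_pow, pow_succ] at *
    linear_combination (-(phi a w) ^ n) * this
  have h3 : c 0 = -τ * c 0 := by simpa using coeff_parity hf hpar 0
  rw [h2]
  linear_combination h1 - (starRingEnd ℂ) a / (1 - (starRingEnd ℂ) a * w) * h3

/-! ### Vanishing -/

lemma one_sub_conj_mul_self (a : ℂ) : 1 - (starRingEnd ℂ) a * a = ((1 - ‖a‖ ^ 2 : ℝ) : ℂ) := by
  rw [Complex.conj_mul']; push_cast; ring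

/-- The `ψ_a`-orbit of `0` stays on the ray through `-a`. -/
lemma iter_zero_eq {a : ℂ} (n : ℕ) : ∃ t : ℝ, 0 ≤ t ∧ (psi a)^[n] 0 = -a * t := by
  induction n with
  | zero => exact ⟨0, le_rfl, by simp⟩
  | succ n ih =>
    obtain ⟨t, ht, h⟩ := ih
    refine ⟨(t + 1) / (1 + ‖a‖ ^ 2 * t), by positivity, ?_⟩
    have h1 : 1 - (starRingEnd ℂ) a * (-a * t) = 1 + (‖a‖ : ℂ) ^ 2 * t := by
      linear_combination (t : ℂ) * Complex.conj_mul' a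
    rw [Function.iterate_succ_apply', h, psi, phi, h1]
    push_cast
    ring

/-- The functional equation along the orbit of `0` (on which `ψ_a' > 0`) forces `f(0) = 0` when
`h(0) = 0`: the real part of `(1 - |x|²) h(x) / (f(0) conj a)` decreases along the orbit, by `1` at
the first step, but starts at `0` and tends to `0`. -/
lemma const_eq_zero {a : ℂ} {c : ℕ → ℂ} (ha : ‖a‖ < 1) (ha0 : a ≠ 0)
    (hc : Summable (fun n => ‖c n‖ ^ 2)) (hh0 : c 1 = 0)
    (hfe : ∀ w : ℂ, ‖w‖ < 1 →
      shift c w = c 0 * (starRingEnd ℂ) a / (1 - (starRingEnd ℂ) a * w) +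
      (1 - (starRingEnd ℂ) a * a) / (1 - (starRingEnd ℂ) a * w) ^ 2 * shift c (psi a w)) :
    c 0 = 0 := by
  by_contra hc0
  set κ := c 0 * (starRingEnd ℂ) a with hκ
  have hκ0 : κ ≠ 0 := mul_ne_zero hc0 (by simpa using ha0)
  set x : ℕ → ℂ := fun n => (psi a)^[n] 0 with hx
  have hx1 : ∀ n, ‖x n‖ < 1 := fun n => norm_iter_lt ha (by simp) n
  set G : ℕ → ℂ := fun n => ((1 - ‖x n‖ ^ 2 : ℝ) : ℂ) * shift c (x n) / κ with hG
  have hlim : Tendsto G atTop (𝓝 0) := by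
    rw [tendsto_zero_iff_norm_tendsto_zero]
    have h := (orbit_shift_tendsto ha ha0 (z := 0) (by simp) hc).div_const ‖κ‖
    rw [zero_div] at h
    refine h.congr (fun n => ?_)
    have h1 : 0 ≤ 1 - ‖x n‖ ^ 2 := by nlinarith [hx1 n, norm_nonneg (x n)]
    simp only [hG]
    rw [norm_div (_ * _), norm_mul (_ : ℂ) (shift c (x n)), Complex.norm_real, Real.norm_eq_abs,
      abs_of_nonneg h1]
  have hstep : ∀ n, ∃ s : ℝ, 0 ≤ s ∧ (n = 0 → s = 1) ∧ G n = s + G (n + 1) := by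
    intro n
    obtain ⟨t, ht, hxt⟩ := iter_zero_eq (a := a) n
    have hxt' : x n = -a * t := hxt
    have hρ : 1 - (starRingEnd ℂ) a * x n = ((1 + ‖a‖ ^ 2 * t : ℝ) : ℂ) := by
      rw [hxt']; push_cast
      linear_combination (t : ℂ) * Complex.conj_mul' a
    set ρ : ℝ := 1 + ‖a‖ ^ 2 * t with hρd
    have hρ0 : 0 < ρ := by positivity
    have hρc : (ρ : ℂ) ≠ 0 := by exact_mod_cast hρ0.ne'
    have h1 : 0 ≤ 1 - ‖x n‖ ^ 2 := by nlinarith [hx1 n, norm_nonneg (x n)]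
    refine ⟨(1 - ‖x n‖ ^ 2) / ρ, by positivity, ?_, ?_⟩
    · rintro rfl
      have hx0 : x 0 = 0 := rfl
      rw [hx0] at hρ ⊢
      have : ρ = 1 := by
        have : (1 : ℂ) = ρ := by simpa using hρ
        exact_mod_cast this.symm
      simp [this]
    · have hxs : x (n + 1) = psi a (x n) := Function.iterate_succ_apply' _ _ _
      have h2 : 1 - ‖x (n + 1)‖ ^ 2 = (1 - ‖a‖ ^ 2) * (1 - ‖x n‖ ^ 2) / ρ ^ 2 := by
        rw [hxs, psi, norm_neg, one_sub_norm_phi ha (hx1 n), hρ, Complex.norm_real,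
          Real.norm_eq_abs, sq_abs]
      simp only [hG]
      rw [h2, hfe _ (hx1 n), hρ, ← hxs, one_sub_conj_mul_self]
      push_cast
      field_simp
  have hG0 : G 0 = 0 := by
    have : shift c (x 0) = 0 := by
      have h0 : x 0 = 0 := rfl
      rw [h0, shift, tsum_eq_single 0 (fun n hn => by simp [hn])]
      simpa using hh0
    simp [hG, this]
  have hG1 : ∀ n, (G (n + 1)).re ≤ -1 := by
    intro n
    induction n with
    | zero =>
      obtain ⟨s, -, hs1, h⟩ := hstep 0
      rw [hG0, hs1 rfl] at h
      have := congrArg Complex.re h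
      simp at this ⊢
      linarith
    | succ n ih =>
      obtain ⟨s, hs, -, h⟩ := hstep (n + 1)
      have := congrArg Complex.re h
      simp at this
      linarith
  have hre : Tendsto (fun n => (G (n + 1)).re) atTop (𝓝 0) := by
    exact (Complex.continuous_re.tendsto 0).comp (hlim.comp (tendsto_add_atTop_nat 1))
  have := le_of_tendsto' hre hG1
  linarith

/-- When `f(0) = 0` the quantity `(1 - |w|²)|h(w)|` is `ψ_a`-invariant, hence zero. -/
lemma shift_eq_zero {a : ℂ} {c : ℕ → ℂ} (ha : ‖a‖ < 1) (ha0 : a ≠ 0)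
    (hc : Summable (fun n => ‖c n‖ ^ 2))
    (hfe : ∀ w : ℂ, ‖w‖ < 1 → shift c w =
      (1 - (starRingEnd ℂ) a * a) / (1 - (starRingEnd ℂ) a * w) ^ 2 * shift c (psi a w))
    {w : ℂ} (hw : ‖w‖ < 1) : shift c w = 0 := by
  have hinv : ∀ n : ℕ, (1 - ‖(psi a)^[n] w‖ ^ 2) * ‖shift c ((psi a)^[n] w)‖ =
      (1 - ‖w‖ ^ 2) * ‖shift c w‖ := by
    intro n
    induction n with
    | zero => rfl
    | succ n ih =>
      have hv := norm_iter_lt ha hw n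
      rw [← ih, Function.iterate_succ_apply']
      set v := (psi a)^[n] w
      have h1 : 0 ≤ 1 - ‖a‖ ^ 2 := by nlinarith [norm_nonneg a]
      rw [hfe v hv, psi, norm_neg, one_sub_norm_phi ha hv, one_sub_conj_mul_self, norm_mul,
        norm_div, norm_pow, Complex.norm_real, Real.norm_eq_abs, abs_of_nonneg h1]
      ring
  have h1 := orbit_shift_tendsto ha ha0 hw hc
  simp only [hinv] at h1
  have h2 := tendsto_nhds_unique h1 tendsto_const_nhds
  have h3 : 1 - ‖w‖ ^ 2 ≠ 0 := by nlinarith [norm_nonneg w]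
  simpa [h3] using h2.symm

/-- Both halves of the theorem at once: `τ = 1` is the odd case and `τ = -1` the even one. -/
lemma main {a : ℂ} {f : ℂ → ℂ} {c : ℕ → ℂ} {τ : ℂ} (ha : ‖a‖ < 1) (ha0 : a ≠ 0)
    (hτ : τ = 1 ∨ τ = -1) (hf : IsH2Rep f c)
    (hpar : ∀ z : ℂ, ‖z‖ < 1 → f (-z) = -τ * f z)
    (horth : ∀ (g : ℂ → ℂ) (d : ℕ → ℂ), IsH2Rep g d →
        (∀ z : ℂ, ‖z‖ < 1 → g (phi a z) = τ * g z) →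
        (∑' n, c n * (starRingEnd ℂ) (d n)) = 0) {z : ℂ} (hz : ‖z‖ < 1) : f z = 0 := by
  have hfe := fun w hw => functional_eq ha hτ hf hpar horth (w := w) hw
  have hc0 : c 0 = 0 := by
    rcases hτ with rfl | rfl
    · have := coeff_parity hf hpar 0
      simp only [pow_zero, mul_one, neg_mul, one_mul] at this
      exact self_eq_neg.mp this
    · refine const_eq_zero ha ha0 hf.1 ?_ hfe
      have := coeff_parity hf hpar 1
      simp only [pow_one, neg_neg, one_mul, mul_neg, mul_one] at this
      exact self_eq_neg.mp this.symm
  have hs : shift c z = 0 :=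
    shift_eq_zero ha ha0 hf.1 (fun w hw => by simpa [hc0] using hfe w hw) hz
  have h1 := (hasSum_shift hf.1 hz).mul_left z
  have h2 := hasSum_succ (u := fun n => c n * z ^ n) (h1.congr_fun (fun n => by ring))
  rw [(hf.2 z hz).unique h2]
  simp [hc0, hs]

end HardyDisk

/-- For `a ≠ 0` in the open unit disk:
(i) an odd `f ∈ H²` orthogonal (in the H² inner product, computed via Taylor
coefficients) to every `g ∈ H²` with `g ∘ φ_a = g` is zero;
(ii) an even `f ∈ H²` orthogonal to every `g ∈ H²` with `g ∘ φ_a = −g` is zero.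
That is, `N(C_0 − 1)^⊥ ∩ N(C_a − 1)^⊥ = {0} = N(C_0 + 1)^⊥ ∩ N(C_a + 1)^⊥`. -/
theorem stmt15 (a : ℂ) (ha : ‖a‖ < 1) (ha0 : a ≠ 0) :
    (∀ (f : ℂ → ℂ) (c : ℕ → ℂ), IsH2Rep f c →
      (∀ z : ℂ, ‖z‖ < 1 → f (-z) = - f z) →
      (∀ (g : ℂ → ℂ) (d : ℕ → ℂ), IsH2Rep g d →
        (∀ z : ℂ, ‖z‖ < 1 → g (phi a z) = g z) →
        (∑' n, c n * (starRingEnd ℂ) (d n)) = 0) →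
      ∀ z : ℂ, ‖z‖ < 1 → f z = 0) ∧
    (∀ (f : ℂ → ℂ) (c : ℕ → ℂ), IsH2Rep f c →
      (∀ z : ℂ, ‖z‖ < 1 → f (-z) = f z) →
      (∀ (g : ℂ → ℂ) (d : ℕ → ℂ), IsH2Rep g d →
        (∀ z : ℂ, ‖z‖ < 1 → g (phi a z) = - g z) →
        (∑' n, c n * (starRingEnd ℂ) (d n)) = 0) →
      ∀ z : ℂ, ‖z‖ < 1 → f z = 0) := by
  refine ⟨fun f c hf hpar horth z hz => ?_, fun f c hf hpar horth z hz => ?_⟩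
  · exact HardyDisk.main (τ := 1) ha ha0 (Or.inl rfl) hf (by simpa using hpar)
      (fun g d hg h => horth g d hg (by simpa using h)) hz
  · exact HardyDisk.main (τ := -1) ha ha0 (Or.inr rfl) hf (by simpa using hpar)
      (fun g d hg h => horth g d hg (by simpa using h)) hz
end
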